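/- Let ℋ be a complex Hilbert space, A ∈ B(ℋ), and k ≥ 2 with k ≤ dim ℋ. Then Ω_k(A) = ⋂{Ω_{k−1}(A + 2e^{iξ}‖A‖P) : ξ ∈ [0,2π), P ∈ P_1}, i.e., Ω_k(A) is the intersection of the sets Ω_{k−1}(A + 2e^{iξ}‖A‖P) over all ξ ∈ [0,2π) and all rank-one orthogonal projections P on ℋ. -/

import Mathlib

noncomputable section

open scoped InnerProductSpace
open Complex

variable {H : Type*} [NormedAddCommGroup H] [InnerProductSpace ℂ H] [CompleteSpace H]

/-- `P` is an orthogonal projection: self-adjoint and idempotent. -/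
def IsOrthProj (P : H →L[ℂ] H) : Prop :=
  IsSelfAdjoint P ∧ P ∘L P = P

/-- The rank of a bounded operator, as a cardinal. -/
def opRank (F : H →L[ℂ] H) : Cardinal :=
  Module.rank ℂ (LinearMap.range (F : H →ₗ[ℂ] H))

/-- The rank-`k` numerical range `Λ_k(A)`. -/
def rankKRange (k : ℕ) (A : H →L[ℂ] H) : Set ℂ :=
  { lam | ∃ P : H →L[ℂ] H, IsOrthProj P ∧ opRank P = k ∧ P ∘L A ∘L P = lam • P }

/-- The classical numerical range `W(A)`. -/
def numRange (A : H →L[ℂ] H) : Set ℂ :=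
  { z | ∃ x : H, ‖x‖ = 1 ∧ ⟪x, A x⟫_ℂ = z }

/-- `λ_k(T)`: the supremum over `k`-dimensional compressions of the `k`-th largest
eigenvalue of the compression (Courant–Fischer form: sup over `k`-dimensional
subspaces of the infimum of the Rayleigh quotient). -/
def lambdaSA (k : ℕ) (T : H →L[ℂ] H) : ℝ :=
  sSup { t : ℝ | ∃ V : Submodule ℂ H, Module.finrank ℂ V = k ∧
    ∀ x ∈ V, ‖x‖ = 1 → t ≤ (⟪x, T x⟫_ℂ).re }

/-- The real part `(T + T*)/2` of an operator. -/
def reOp (T : H →L[ℂ] H) : H →L[ℂ] H :=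
  (2 : ℂ)⁻¹ • (T + ContinuousLinearMap.adjoint T)

/-- The set `Ω_k(A)`. -/
def omegaK (k : ℕ) (A : H →L[ℂ] H) : Set ℂ :=
  { μ | ∀ ξ ∈ Set.Ico (0 : ℝ) (2 * Real.pi),
      (Complex.exp (ξ * Complex.I) * μ).re ≤ lambdaSA k (reOp (Complex.exp (ξ * Complex.I) • A)) }



theorem aux_unit (E : Type*) [NormedAddCommGroup E] [NormedSpace ℂ E] [Nontrivial E] :
    ∃ v : E, ‖v‖ = 1 := by
  obtain ⟨x, hx⟩ := exists_ne (0 : E)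
  have hn : 0 < ‖x‖ := norm_pos_iff.2 hx
  exact ⟨((‖x‖⁻¹ : ℝ) : ℂ) • x, by rw [norm_smul]; simp [hn.ne']⟩

theorem aux_sub_exists {n : ℕ} {E : Type*} [AddCommGroup E] [Module ℂ E]
    (h : (n : Cardinal) ≤ Module.rank ℂ E) : ∃ V : Submodule ℂ E, Module.finrank ℂ V = n := by
  obtain ⟨s, hs, hl⟩ := Module.le_rank_iff_exists_finset.1 h
  exact ⟨Submodule.span ℂ (s : Set E), by rw [finrank_span_finset_eq_card hl, hs]⟩

theorem aux_sub_le {n : ℕ} {E : Type*} [AddCommGroup E] [Module ℂ E] (K : Submodule ℂ E)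
    (h : n ≤ Module.finrank ℂ K) : ∃ V : Submodule ℂ E, V ≤ K ∧ Module.finrank ℂ V = n := by
  have h2 : (n : Cardinal) ≤ Module.rank ℂ K := by
    rcases Nat.eq_zero_or_pos n with rfl | hn
    · simp
    · have := Module.finite_of_finrank_pos (lt_of_lt_of_le hn h)
      rw [← Module.finrank_eq_rank]
      exact_mod_cast h
  obtain ⟨V, hV⟩ := aux_sub_exists h2
  exact ⟨V.map K.subtype, Submodule.map_subtype_le K V, by
    rw [Submodule.finrank_map_subtype_eq, hV]⟩

theorem aux_scale (T : H →L[ℂ] H) (V : Submodule ℂ H) (t : ℝ) 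
    (h : ∀ x ∈ V, ‖x‖ = 1 → t ≤ (⟪x, T x⟫_ℂ).re) (x : H) (hx : x ∈ V) :
    t * ‖x‖ ^ 2 ≤ (⟪x, T x⟫_ℂ).re := by
  by_cases h0 : x = 0
  · simp [h0]
  have hn : 0 < ‖x‖ := norm_pos_iff.2 h0
  have h1 := h (((‖x‖⁻¹ : ℝ) : ℂ) • x) (V.smul_mem _ hx) (by
    rw [norm_smul]; simp [hn.ne'])
  rw [map_smul, inner_smul_left, inner_smul_right, conj_ofReal, re_ofReal_mul, re_ofReal_mul] at h1
  have h2 : t * ‖x‖ ^ 2 ≤ (‖x‖⁻¹ * (‖x‖⁻¹ * (⟪x, T x⟫_ℂ).re)) * ‖x‖ ^ 2 := by gcongr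
  calc _ ≤ _ := h2
    _ = _ := by field_simp

theorem aux_re_le (T : H →L[ℂ] H) (x : H) : |(⟪x, T x⟫_ℂ).re| ≤ ‖T‖ * ‖x‖ ^ 2 := by
  calc _ ≤ ‖⟪x, T x⟫_ℂ‖ := Complex.abs_re_le_norm _
    _ ≤ ‖x‖ * ‖T x‖ := norm_inner_le_norm _ _
    _ ≤ ‖x‖ * (‖T‖ * ‖x‖) := by gcongr; exact T.le_opNorm x
    _ = _ := by ring

theorem aux_bdd (k : ℕ) (hk : 1 ≤ k) (T : H →L[ℂ] H) :
    BddAbove { t : ℝ | ∃ V : Submodule ℂ H, Module.finrank ℂ V = k ∧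
    ∀ x ∈ V, ‖x‖ = 1 → t ≤ (⟪x, T x⟫_ℂ).re } := by
  refine ⟨‖T‖, ?_⟩
  rintro t ⟨V, hV, h⟩
  have : Nontrivial V := Module.nontrivial_of_finrank_pos (R := ℂ) (by omega)
  obtain ⟨v, hv⟩ := aux_unit V
  have h1 := h v v.2 hv
  have h2 := aux_re_le T v
  have hv' : ‖(v : H)‖ = 1 := hv
  rw [hv'] at h2
  have := (abs_le.1 h2).2
  linarith

theorem aux_le_lambda (k : ℕ) (hk : 1 ≤ k) (T : H →L[ℂ] H) (t : ℝ) (V : Submodule ℂ H)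
    (hV : Module.finrank ℂ V = k) (h : ∀ x ∈ V, ‖x‖ = 1 → t ≤ (⟪x, T x⟫_ℂ).re) :
    t ≤ lambdaSA k T := le_csSup (aux_bdd k hk T) ⟨V, hV, h⟩

theorem aux_lambda_le (k : ℕ) (hk : (k : Cardinal) ≤ Module.rank ℂ H) (T : H →L[ℂ] H) (c : ℝ)
    (h : ∀ (t : ℝ) (V : Submodule ℂ H), Module.finrank ℂ V = k → 
      (∀ x ∈ V, ‖x‖ = 1 → t ≤ (⟪x, T x⟫_ℂ).re) → t ≤ c) :
    lambdaSA k T ≤ c := by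
  refine csSup_le ?_ ?_
  · obtain ⟨V, hV⟩ := aux_sub_exists hk
    refine ⟨-‖T‖, V, hV, fun x _ hx => ?_⟩
    have h2 := aux_re_le T x
    rw [hx] at h2
    have := (abs_le.1 h2).1
    linarith
  · rintro t ⟨V, hV, h'⟩
    exact h t V hV h'

theorem aux_reOp (T : H →L[ℂ] H) (x : H) : (⟪x, reOp T x⟫_ℂ).re = (⟪x, T x⟫_ℂ).re := by
  have h : (⟪x, (ContinuousLinearMap.adjoint T) x⟫_ℂ).re = (⟪x, T x⟫_ℂ).re := by
    rw [ContinuousLinearMap.adjoint_inner_right, ← inner_conj_symm, conj_re]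
  have e : (2 : ℂ)⁻¹ = ((2⁻¹ : ℝ) : ℂ) := by norm_num
  simp only [reOp, smul_apply, add_apply]
  rw [inner_smul_right, inner_add_right, e, re_ofReal_mul, add_re, h]
  ring

theorem aux_reOp_symm (T : H →L[ℂ] H) (x y : H) :
    ⟪reOp T x, y⟫_ℂ = ⟪x, reOp T y⟫_ℂ := by
  simp only [reOp, smul_apply, add_apply]
  rw [inner_smul_right, inner_smul_left, inner_add_right, inner_add_left,
    ContinuousLinearMap.adjoint_inner_right, ContinuousLinearMap.adjoint_inner_left]
  have h2 : (starRingEnd ℂ) 2 = 2 := Complex.conj_ofNat 2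
  simp [add_comm, h2]

/-- easy direction -/
theorem aux_easy (k : ℕ) (hk2 : 2 ≤ k) (hk : (k : Cardinal) ≤ Module.rank ℂ H)
    (T S P : H →L[ℂ] H) (hP : opRank P = 1)
    (hS : ∀ x, P x = 0 → (⟪x, S x⟫_ℂ).re = (⟪x, T x⟫_ℂ).re) :
    lambdaSA k T ≤ lambdaSA (k - 1) S := by
  refine aux_lambda_le k hk T _ ?_
  intro t V hV h
  have : FiniteDimensional ℂ V := Module.finite_of_finrank_pos (by omega)
  let f : V →ₗ[ℂ] H := (P : H →ₗ[ℂ] H) ∘ₗ V.subtype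
  have hr := f.finrank_range_add_finrank_ker
  have hPr : Module.finrank ℂ (LinearMap.range (P : H →ₗ[ℂ] H)) = 1 :=
    Module.rank_eq_one_iff_finrank_eq_one.1 hP
  have : FiniteDimensional ℂ (LinearMap.range (P : H →ₗ[ℂ] H)) :=
    Module.finite_of_finrank_pos (by omega)
  have hle : Module.finrank ℂ (LinearMap.range f) ≤ 1 := by
    rw [← hPr]
    exact Submodule.finrank_mono (LinearMap.range_comp_le_range _ _)
  obtain ⟨W, hW, hWd⟩ := aux_sub_le (n := k - 1) (LinearMap.ker f) (by omega)
  refine aux_le_lambda (k - 1) (by omega) S t (W.map V.subtype)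
    (by rw [Submodule.finrank_map_subtype_eq, hWd]) ?_
  rintro _ ⟨w, hw, rfl⟩ hn
  have h0 : P (V.subtype w) = 0 := hW hw
  rw [hS _ h0]
  exact h _ w.2 hn

theorem aux_quad (a b c : ℝ) (h : ∀ t : ℝ, 0 ≤ a + 2 * t * b + t ^ 2 * c) : b ^ 2 ≤ a * c := by
  have := discrim_le_zero (a := c) (b := 2 * b) (c := a) (fun t => by nlinarith [h t])
  unfold discrim at this
  nlinarith

/-- hard direction -/
theorem aux_hard (k : ℕ) (hk2 : 2 ≤ k) (hk : (k : Cardinal) ≤ Module.rank ℂ H)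
    (T : H →L[ℂ] H) (hT : ∀ x y : H, ⟪T x, y⟫_ℂ = ⟪x, T y⟫_ℂ) (M : ℝ) (hM : 0 ≤ M)
    (hTM : ∀ x, |(⟪x, T x⟫_ℂ).re| ≤ M * ‖x‖ ^ 2) (ε : ℝ) (hε : 0 < ε) :
    ∃ u : H, ‖u‖ = 1 ∧ ∀ S : H →L[ℂ] H,
      (∀ x, (⟪x, S x⟫_ℂ).re = (⟪x, T x⟫_ℂ).re - 2 * M * ‖⟪u, x⟫_ℂ‖ ^ 2) →
      lambdaSA (k - 1) S ≤ lambdaSA k T + 2 * ε := by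
  have hk1 : ((k - 1 : ℕ) : Cardinal) ≤ Module.rank ℂ H :=
    le_trans (by exact_mod_cast Nat.sub_le k 1) hk
  obtain ⟨V0, hV0⟩ := aux_sub_exists hk
  have : Nontrivial V0 := Module.nontrivial_of_finrank_pos (R := ℂ) (by omega)
  obtain ⟨v0, hv0⟩ := aux_unit V0
  have hlow : -M ≤ lambdaSA k T := by
    refine aux_le_lambda k (by omega) T _ V0 hV0 (fun x _ hx => ?_)
    have := (abs_le.1 (hTM x)).1
    rw [hx] at this; linarith
  set Q : Set ℝ := {t | ∃ x : H, ‖x‖ = 1 ∧ (⟪x, T x⟫_ℂ).re = t} with hQ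
  have hQne : Q.Nonempty := ⟨_, v0, hv0, rfl⟩
  have hQb : BddAbove Q := by
    refine ⟨M, ?_⟩
    rintro _ ⟨x, hx, rfl⟩
    have := (abs_le.1 (hTM x)).2
    rw [hx] at this; linarith
  set L := sSup Q with hL
  have hLle : ∀ x : H, ‖x‖ = 1 → (⟪x, T x⟫_ℂ).re ≤ L := fun x hx => le_csSup hQb ⟨x, hx, rfl⟩
  have hLM : L ≤ M := csSup_le hQne (by
    rintro _ ⟨x, hx, rfl⟩
    have := (abs_le.1 (hTM x)).2
    rw [hx] at this; linarith)
  have hLM' : -M ≤ L := by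
    have := (abs_le.1 (hTM v0)).1
    have h2 := hLle v0 hv0
    rw [show ‖(v0 : H)‖ = 1 from hv0] at this; linarith
  set q : H → ℝ := fun x => L * ‖x‖ ^ 2 - (⟪x, T x⟫_ℂ).re with hq
  have hq0 : ∀ x, 0 ≤ q x := by
    intro x
    have := aux_scale (-T) ⊤ (-L) (fun x _ hx => by simpa using hLle x hx) x trivial
    simp at this
    simp only [hq]; linarith
  have hqM : ∀ x, q x ≤ 2 * M * ‖x‖ ^ 2 := by
    intro x
    have := (abs_le.1 (hTM x)).1
    simp only [hq]; nlinarith [sq_nonneg ‖x‖]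
  have hadd : ∀ x y : H, (⟪x + y, T (x + y)⟫_ℂ).re =
      (⟪x, T x⟫_ℂ).re + (⟪y, T y⟫_ℂ).re + 2 * (⟪x, T y⟫_ℂ).re := by
    intro x y
    have : (⟪y, T x⟫_ℂ).re = (⟪x, T y⟫_ℂ).re := by
      rw [← hT x y, ← inner_conj_symm, conj_re]
    rw [map_add, inner_add_left, inner_add_right, inner_add_right]
    simp only [add_re]; linarith
  have hsm : ∀ (a : ℂ) (x : H), (⟪a • x, T (a • x)⟫_ℂ).re = ‖a‖ ^ 2 * (⟪x, T x⟫_ℂ).re := by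
    intro a x
    rw [map_smul, inner_smul_left, inner_smul_right, ← mul_assoc, Complex.conj_mul', ← ofReal_pow,
      re_ofReal_mul]
  have hnadd : ∀ x y : H, ⟪x, y⟫_ℂ = 0 → ‖x + y‖ ^ 2 = ‖x‖ ^ 2 + ‖y‖ ^ 2 := by
    intro x y h
    have := norm_add_sq_eq_norm_sq_add_norm_sq_of_inner_eq_zero (𝕜 := ℂ) x y h
    nlinarith
  have hCS : ∀ x y : H, ⟪x, y⟫_ℂ = 0 → ((⟪x, T y⟫_ℂ).re) ^ 2 ≤ q x * q y := by
    intro x y hxy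
    rw [← neg_sq]
    refine aux_quad _ _ _ (fun t => ?_)
    have h1 := hq0 (x + (t : ℂ) • y)
    simp only [hq] at h1 ⊢
    rw [hadd, hsm, hnadd _ _ (by rw [inner_smul_right, hxy, mul_zero]), norm_smul, map_smul,
      inner_smul_right, re_ofReal_mul, mul_pow, norm_real, Real.norm_eq_abs, sq_abs] at h1
    linarith
  set δ := min ε (ε ^ 2 / (2 * M + 1)) with hδ
  have hδ0 : 0 < δ := lt_min hε (by positivity)
  have hδε : δ ≤ ε := min_le_left _ _
  have hδM : δ * (2 * M) ≤ ε ^ 2 := by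
    have : δ ≤ ε ^ 2 / (2 * M + 1) := min_le_right _ _
    rw [le_div_iff₀ (by positivity)] at this
    nlinarith
  obtain ⟨_, ⟨u, hu, rfl⟩, huL⟩ := exists_lt_of_lt_csSup hQne (show L - δ < sSup Q by linarith)
  have hqu : q u ≤ δ := by simp only [hq]; rw [hu]; linarith
  have hqa : ∀ (a : ℂ), q (a • u) = ‖a‖ ^ 2 * q u := by
    intro a
    simp only [hq]; rw [hsm, norm_smul]; ring
  have hcross : ∀ (a : ℂ) (w : H), ⟪u, w⟫_ℂ = 0 →
      |2 * (⟪a • u, T w⟫_ℂ).re| ≤ ε * (‖a‖ ^ 2 + ‖w‖ ^ 2) := by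
    intro a w hw
    have h1 := hCS (a • u) w (by rw [inner_smul_left, hw, mul_zero])
    rw [hqa] at h1
    have h2 : ‖a‖ ^ 2 * q u * q w ≤ ‖a‖ ^ 2 * δ * (2 * M * ‖w‖ ^ 2) := by
      gcongr
      · exact hq0 w
      · exact hqM w
    have h3 : ((⟪a • u, T w⟫_ℂ).re) ^ 2 ≤ (ε * (‖a‖ * ‖w‖)) ^ 2 := by
      calc _ ≤ _ := h1
        _ ≤ _ := h2
        _ = (δ * (2 * M)) * (‖a‖ * ‖w‖) ^ 2 := by ring
        _ ≤ ε ^ 2 * (‖a‖ * ‖w‖) ^ 2 := by gcongr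
        _ = _ := by ring
    have h4 := abs_le.1 (abs_le_of_sq_le_sq h3 (by positivity))
    rw [abs_le]
    have h5 := mul_nonneg hε.le (sq_nonneg (‖a‖ - ‖w‖))
    constructor <;> nlinarith [h4.1, h4.2]
  refine ⟨u, hu, fun S hS => ?_⟩
  refine aux_lambda_le (k - 1) hk1 S _ ?_
  intro s V hV h
  by_cases hs : s - ε < -M
  · linarith
  push Not at hs
  have hsV := aux_scale S V s h
  have : FiniteDimensional ℂ V := Module.finite_of_finrank_pos (by omega)
  have : Nontrivial V := Module.nontrivial_of_finrank_pos (R := ℂ) (by omega)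
  have hsL : s ≤ L := by
    obtain ⟨v, hv⟩ := aux_unit V
    have h1 := h v v.2 hv
    rw [hS] at h1
    have h2 := hLle v hv
    nlinarith [mul_nonneg hM (sq_nonneg ‖⟪u, (v : H)⟫_ℂ‖)]
  have huu : ⟪u, u⟫_ℂ = 1 := by rw [inner_self_eq_norm_sq_to_K, hu]; simp
  by_cases huV : u ∈ V
  · have h1 := h u huV hu
    rw [hS, huu] at h1
    have := hLle u hu
    simp at h1
    linarith
  have hdim : Module.finrank ℂ (V ⊔ Submodule.span ℂ {u} : Submodule ℂ H) = k := by
    have h1 := Submodule.finrank_sup_add_finrank_inf_eq V (Submodule.span ℂ {u})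
    have hu0 : u ≠ 0 := by rintro rfl; simp at hu
    have h2 : V ⊓ Submodule.span ℂ {u} = ⊥ := by
      rw [← disjoint_iff]
      exact (Submodule.disjoint_span_singleton' hu0).2 huV
    rw [h2, finrank_bot, finrank_span_singleton hu0, hV] at h1
    omega
  suffices s - 2 * ε ≤ lambdaSA k T by linarith
  refine aux_le_lambda k (by omega) T _ _ hdim ?_
  intro x hx hx1
  obtain ⟨v, hv, y, hy, rfl⟩ := Submodule.mem_sup.1 hx
  obtain ⟨b, rfl⟩ := Submodule.mem_span_singleton.1 hy
  obtain ⟨a, w, hw, rfl⟩ : ∃ (a : ℂ) (w : H), ⟪u, w⟫_ℂ = 0 ∧ v = a • u + w :=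
    ⟨⟪u, v⟫_ℂ, v - ⟪u, v⟫_ℂ • u, by rw [inner_sub_right, inner_smul_right, huu]; simp, by abel⟩
  have hxe : a • u + w + b • u = (a + b) • u + w := by rw [add_smul]; abel
  have horth : ∀ c : ℂ, ⟪c • u, w⟫_ℂ = 0 := fun c => by rw [inner_smul_left, hw, mul_zero]
  have e1 := hsV _ hv
  rw [hS, hadd, hsm, hnadd _ _ (horth a), norm_smul, hu, inner_add_right, inner_smul_right, huu,
    hw] at e1
  have hx2 : ‖a + b‖ ^ 2 + ‖w‖ ^ 2 = 1 := by
    have := hnadd _ _ (horth (a + b))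
    rw [← hxe, hx1, norm_smul, hu] at this
    linarith
  rw [hxe, hadd, hsm]
  have c1 := abs_le.1 (hcross a w hw)
  have c2 := abs_le.1 (hcross (a + b) w hw)
  have hr := hLle u hu
  set r := (⟪u, T u⟫_ℂ).re
  set g := (⟪w, T w⟫_ℂ).re
  simp only [mul_one, add_zero] at e1
  have e2 : (s - ε) * ‖w‖ ^ 2 ≤ g := by
    have : 0 ≤ (s - ε + 2 * M - r) * ‖a‖ ^ 2 := mul_nonneg (by linarith) (sq_nonneg _)
    nlinarith [c1.2]
  have e3 : (s - ε) * ‖a + b‖ ^ 2 ≤ ‖a + b‖ ^ 2 * r := by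
    rw [mul_comm]; gcongr; linarith
  rw [hx2] at c2
  nlinarith [c2.1]

/-- For `2 ≤ k ≤ dim ℋ`, `Ω_k(A)` is the intersection of the sets
`Ω_{k-1}(A + 2e^{iξ}‖A‖P)` over all `ξ ∈ [0,2π)` and all rank-one orthogonal
projections `P`. -/
theorem omegaK_eq_iInter_rank_one
    (k : ℕ) (hk2 : 2 ≤ k) (hk : (k : Cardinal) ≤ Module.rank ℂ H)
    (A : H →L[ℂ] H) :
    omegaK k A =
      ⋂ ξ ∈ Set.Ico (0 : ℝ) (2 * Real.pi),
        ⋂ P ∈ {P : H →L[ℂ] H | IsOrthProj P ∧ opRank P = 1},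
          omegaK (k - 1) (A + (2 * Complex.exp (ξ * Complex.I) * (‖A‖ : ℂ)) • P) := by
  have hset : ∀ (ξ θ : ℝ) (P : H →L[ℂ] H) (x : H),
      (⟪x, reOp (Complex.exp (θ * Complex.I) •
        (A + (2 * Complex.exp (ξ * Complex.I) * (‖A‖ : ℂ)) • P)) x⟫_ℂ).re =
      (⟪x, reOp (Complex.exp (θ * Complex.I) • A) x⟫_ℂ).re + 
        (Complex.exp (θ * Complex.I) * Complex.exp (ξ * Complex.I) *
          ((2 * ‖A‖ : ℝ) : ℂ) * ⟪x, P x⟫_ℂ).re := by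
    intro ξ θ P x
    rw [aux_reOp, aux_reOp, ← add_re]
    congr 1
    simp only [smul_apply, add_apply, inner_smul_right,
      inner_add_right]
    push_cast
    ring
  ext μ
  simp only [Set.mem_iInter]
  constructor
  · intro hμ ξ hξ P hP θ hθ
    refine (hμ θ hθ).trans (aux_easy k hk2 hk _ _ P hP.2 ?_)
    intro x hx
    rw [hset, hx]; simp
  · intro hμ θ hθ
    obtain ⟨ξ, hξ, he⟩ : ∃ ξ ∈ Set.Ico (0 : ℝ) (2 * Real.pi),
        Complex.exp (θ * Complex.I) * Complex.exp (ξ * Complex.I) = -1 := by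
      have hpi := Real.pi_pos
      by_cases h : θ ≤ Real.pi
      · refine ⟨Real.pi - θ, ⟨by linarith, by linarith [hθ.1]⟩, ?_⟩
        rw [← Complex.exp_add, ← Complex.exp_pi_mul_I]
        congr 1; push_cast; ring
      · push Not at h
        refine ⟨3 * Real.pi - θ, ⟨by linarith [hθ.2], by linarith⟩, ?_⟩
        rw [← Complex.exp_add, ← Complex.exp_pi_mul_I, ← Complex.exp_periodic (Real.pi * Complex.I)]
        congr 1; push_cast; ring
    refine le_of_forall_pos_le_add (fun ε hε => ?_)
    obtain ⟨u, hu, h⟩ := aux_hard k hk2 hk (reOp (Complex.exp (θ * Complex.I) • A))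
      (aux_reOp_symm _) ‖A‖ (norm_nonneg _) (fun x => by
        rw [aux_reOp]
        refine (aux_re_le _ x).trans (le_of_eq ?_)
        rw [norm_smul, Complex.norm_exp_ofReal_mul_I, one_mul]) (ε / 2) (by linarith)
    have hu0 : u ≠ 0 := by rintro rfl; simp at hu
    have hP : IsOrthProj (Submodule.span ℂ {u}).starProjection ∧
        opRank (Submodule.span ℂ {u}).starProjection = 1 := by
      refine ⟨⟨isStarProjection_starProjection.isSelfAdjoint,
        Submodule.isIdempotentElem_starProjection _⟩, ?_⟩
      unfold opRank
      rw [Module.rank_eq_one_iff_finrank_eq_one]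
      have := Submodule.range_starProjection (Submodule.span ℂ {u})
      rw [← finrank_span_singleton (K := ℂ) hu0]
      exact congrArg (fun W : Submodule ℂ H => Module.finrank ℂ W) this
    have h1 := hμ ξ hξ _ hP θ hθ
    have h2 := h _ (fun x => by
      rw [hset ξ θ (Submodule.span ℂ {u}).starProjection x, he,
        Submodule.starProjection_unit_singleton ℂ hu, inner_smul_right,
        ← inner_conj_symm x u, Complex.mul_conj', neg_one_mul, ← ofReal_neg, ← ofReal_pow,
        ← ofReal_mul, ofReal_re]
      ring)
    linarith
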